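/- arXiv:dg-ga/9503014 — 3 statements merged into one kernel-verified Lean document; each statement's English description precedes it below -/
import Mathlib

section
/- Let E be a complex Banach space, U ⊆ ℂ a nonempty open connected set, and R : U → B(E) an analytic family of operators such that R(λ) is a compact operator for every λ ∈ U. Suppose there exists λ₀ ∈ U such that id + R(λ₀) is injective. Then the set S = {λ ∈ U : id + R(λ) is not invertible in B(E)} is closed in U and discrete (i.e., S has no accumulation point in U), and the map λ ↦ (id + R(λ))⁻¹ is analytic on U \ S. -/
open Filter Topology

namespace AnalyticFredholmAux

variable {E : Type*} [NormedAddCommGroup E] [NormedSpace ℂ E]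

theorem isUnit_of_injective [CompleteSpace E] (K : E →L[ℂ] E) (hK : IsCompactOperator K)
    (hinj : ∀ x, x + K x = 0 → x = 0) : IsUnit (1 + K) := by
  rcases hK.hasEigenvalue_or_mem_resolventSet (μ := -1) (by simp) with h | h
  · exfalso
    obtain ⟨v, hv⟩ := h.exists_hasEigenvector
    apply hv.2
    apply hinj
    have := hv.apply_eq_smul
    have h2 : K v = -v := by simpa using this
    simp [h2]
  · rw [spectrum.mem_resolventSet_iff, ← IsUnit.neg_iff] at h
    convert h using 1
    simp [Algebra.algebraMap_eq_smul_one, add_comm]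

theorem injective_of_isUnit (A : E →L[ℂ] E) (h : IsUnit A) (x : E) (hx : A x = 0) : x = 0 := by
  obtain ⟨u, rfl⟩ := h
  have h1 : ((↑u⁻¹ : E →L[ℂ] E) * (u : E →L[ℂ] E)) x = x := by simp
  rw [mul_apply_eq_comp, hx, map_zero] at h1
  exact h1.symm

theorem finiteDimensional_ker (K : E →L[ℂ] E) (hK : IsCompactOperator K) :
    FiniteDimensional ℂ (LinearMap.ker ((1 + K : E →L[ℂ] E) : E →ₗ[ℂ] E)) := by
  set N := LinearMap.ker ((1 + K : E →L[ℂ] E) : E →ₗ[ℂ] E) with hN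
  have hclosed : IsClosed (N : Set E) := (1 + K : E →L[ℂ] E).isClosed_ker
  have h1 : IsCompactOperator (fun x : N => -K x) := (hK.comp_clm N.subtypeL).neg
  have hmem : ∀ x : N, -K x = x := by
    intro x
    have : (x : E) + K x = 0 := by simpa [hN] using x.2
    exact (eq_neg_of_add_eq_zero_left this).symm
  have h2 := h1.codRestrict (V := N) (fun x => by rw [hmem x]; exact x.2) hclosed
  apply FiniteDimensional.of_isCompactOperator_id (𝕜 := ℂ)
  have h3 : (id : N → N) = Set.codRestrict (fun x : N => -K x) N
      (fun x => by rw [hmem x]; exact x.2) := by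
    funext x
    exact Subtype.ext (hmem x).symm
  rw [h3]
  exact h2

theorem injective_of_surjective [CompleteSpace E] (K : E →L[ℂ] E) (hK : IsCompactOperator K)
    (hs : Function.Surjective (1 + K : E →L[ℂ] E)) : ∀ x, x + K x = 0 → x = 0 := by
  have hfd := finiteDimensional_ker K hK
  obtain ⟨B, hB⟩ : ∃ B : E →L[ℂ] E, ∀ x, (1 + K) (B x) = x := by
    obtain ⟨g, hg⟩ := Submodule.ClosedComplemented.of_finiteDimensional
      (LinearMap.ker ((1 + K : E →L[ℂ] E) : E →ₗ[ℂ] E))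
    let e := ContinuousLinearMap.equivProdOfSurjectiveOfIsCompl (1 + K) g
      (LinearMap.range_eq_top.mpr hs) (LinearMap.range_eq_top.mpr fun x => ⟨x, hg x⟩)
      (LinearMap.isCompl_of_proj hg)
    refine ⟨e.symm.toContinuousLinearMap.comp (ContinuousLinearMap.inl ℂ _ _), fun x => ?_⟩
    exact congrArg Prod.fst (e.apply_symm_apply (x, 0))
  have hB' : ∀ x, B x = x - K (B x) := fun x => by
    have := hB x
    simp only [add_apply, one_apply_eq_self] at this
    exact eq_sub_of_add_eq this
  have hu : IsUnit (1 + (-(K.comp B))) := by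
    apply isUnit_of_injective
    · exact (hK.comp_clm B).neg
    · intro x hx
      have h3 : B x = 0 := by
        rw [hB' x, sub_eq_add_neg]; simpa using hx
      have := hB x
      rw [h3, map_zero] at this
      exact this.symm
  have hBu : 1 + (-(K.comp B)) = B := by
    ext x
    have h4 : (1 + (-(K.comp B))) x = x - K (B x) := by simp [sub_eq_add_neg]
    rw [h4, ← hB' x]
  rw [hBu] at hu
  intro x hx
  obtain ⟨u, hu⟩ := hu
  have h5 : B ((↑u⁻¹ : E →L[ℂ] E) x) = x := by
    rw [← hu, ← mul_apply_eq_comp]; simp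
  have h6 := hB ((↑u⁻¹ : E →L[ℂ] E) x)
  rw [h5] at h6
  have h7 : (↑u⁻¹ : E →L[ℂ] E) x = 0 := by rw [← h6]; simpa using hx
  rw [← h5, h7, map_zero]

theorem isCompactOperator_finiteRank (F : E →L[ℂ] E)
    (hF : FiniteDimensional ℂ (LinearMap.range (F : E →ₗ[ℂ] E))) : IsCompactOperator F := by
  have : ProperSpace (LinearMap.range (F : E →ₗ[ℂ] E)) := FiniteDimensional.proper ℂ _
  have h := isCompactOperator_of_locallyCompactSpace_dom
    (F.codRestrict (LinearMap.range (F : E →ₗ[ℂ] E)) (fun x => ⟨x, rfl⟩))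
  exact h.clm_comp (LinearMap.range (F : E →ₗ[ℂ] E)).subtypeL

theorem exists_finiteRank [CompleteSpace E] (n : ℕ) : ∀ (K : E →L[ℂ] E), IsCompactOperator K →
    Module.finrank ℂ (LinearMap.ker ((1 + K : E →L[ℂ] E) : E →ₗ[ℂ] E)) = n →
    ∃ F : E →L[ℂ] E, FiniteDimensional ℂ (LinearMap.range (F : E →ₗ[ℂ] E)) ∧
      IsUnit (1 + K + F) := by
  induction n using Nat.strong_induction_on with
  | _ n ih =>
  intro K hK hn
  have hfd := finiteDimensional_ker K hK
  by_cases hinj : ∀ x, x + K x = 0 → x = 0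
  · refine ⟨0, ?_, by simpa using isUnit_of_injective K hK hinj⟩
    rw [ContinuousLinearMap.toLinearMap_zero, LinearMap.range_zero]
    infer_instance
  have hs : ¬ Function.Surjective (1 + K : E →L[ℂ] E) :=
    fun h => hinj (injective_of_surjective K hK h)
  push Not at hinj
  obtain ⟨x, hx, hx0⟩ := hinj
  simp only [Function.Surjective, not_forall, not_exists] at hs
  obtain ⟨y, hy⟩ := hs
  obtain ⟨f, hf⟩ := SeparatingDual.exists_eq_one (R := ℂ) hx0
  set F₁ : E →L[ℂ] E := f.smulRight y with hF₁
  have hF₁fd : FiniteDimensional ℂ (LinearMap.range (F₁ : E →ₗ[ℂ] E)) := by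
    have hle : LinearMap.range (F₁ : E →ₗ[ℂ] E) ≤ ℂ ∙ y := by
      rintro _ ⟨v, rfl⟩
      exact Submodule.smul_mem _ _ (Submodule.mem_span_singleton_self y)
    exact Submodule.finiteDimensional_of_le hle
  have hK' : IsCompactOperator (K + F₁ : E →L[ℂ] E) :=
    hK.add (isCompactOperator_finiteRank F₁ hF₁fd)
  have key : ∀ v, v + (K v + f v • y) = 0 → f v = 0 ∧ v + K v = 0 := by
    intro v hv
    have hfv : f v = 0 := by
      by_contra hne
      apply hy (-(f v)⁻¹ • v)
      have h8 : v + K v = -(f v • y) := by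
        rw [← add_assoc] at hv; exact eq_neg_of_add_eq_zero_left hv
      have h9 : (1 + K) v = -(f v • y) := by simpa using h8
      rw [map_smul, h9, neg_smul, smul_neg, neg_neg, smul_smul, inv_mul_cancel₀ hne, one_smul]
    refine ⟨hfv, by simpa [hfv] using hv⟩
  have hlt : LinearMap.ker ((1 + (K + F₁) : E →L[ℂ] E) : E →ₗ[ℂ] E) <
      LinearMap.ker ((1 + K : E →L[ℂ] E) : E →ₗ[ℂ] E) := by
    refine lt_of_le_of_ne ?_ ?_
    · intro v hv
      have := (key v (by simpa [hF₁] using hv)).2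
      simpa using this
    · intro heq
      have hxk : x ∈ LinearMap.ker ((1 + K : E →L[ℂ] E) : E →ₗ[ℂ] E) := by simpa using hx
      rw [← heq] at hxk
      have := (key x (by simpa [hF₁] using hxk)).1
      rw [hf] at this
      exact one_ne_zero this
  obtain ⟨F₂, hF₂, hu⟩ := ih _ (hn ▸ Submodule.finrank_lt_finrank_of_lt hlt) (K + F₁) hK' rfl
  refine ⟨F₁ + F₂, ?_, by rw [← add_assoc, add_assoc 1 K F₁]; exact hu⟩
  exact Submodule.finiteDimensional_of_le
    (LinearMap.range_add_le (F₁ : E →ₗ[ℂ] E) (F₂ : E →ₗ[ℂ] E))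

theorem local_alternative [CompleteSpace E] {U : Set ℂ} (hUopen : IsOpen U)
    (R : ℂ → E →L[ℂ] E) (hRan : AnalyticOnNhd ℂ R U)
    (hRcpt : ∀ z ∈ U, IsCompactOperator (R z)) (z : ℂ) (hz : z ∈ U) :
    (∀ᶠ w in 𝓝[≠] z, IsUnit (1 + R w)) ∨ (∀ᶠ w in 𝓝 z, ¬ IsUnit (1 + R w)) := by
  obtain ⟨F, hF, hu⟩ := exists_finiteRank _ (R z) (hRcpt z hz) rfl
  set V := LinearMap.range (F : E →ₗ[ℂ] E) with hV
  set p : E →L[ℂ] V := F.codRestrict V (fun x => ⟨x, rfl⟩) with hp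
  have hGan : AnalyticAt ℂ (fun w => 1 + R w + F) z :=
    (analyticAt_const.add (hRan z hz)).add analyticAt_const
  have hGu : ∀ᶠ w in 𝓝 z, IsUnit (1 + R w + F) :=
    hGan.continuousAt.eventually (Units.isOpen.mem_nhds hu)
  have hGi : AnalyticAt ℂ (fun w => Ring.inverse (1 + R w + F)) z := by
    obtain ⟨u, hu⟩ := hu
    exact AnalyticAt.fun_comp (g := Ring.inverse) (by rw [← hu]; exact analyticAt_inverse u) hGan
  let b := Module.finBasis ℂ V
  let m : ℂ → V →ₗ[ℂ] V := fun w =>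
    ((1 - (p.comp ((Ring.inverse (1 + R w + F)).comp V.subtypeL)) : V →L[ℂ] V) : V →ₗ[ℂ] V)
  let d : ℂ → ℂ := fun w => (LinearMap.toMatrix b b (m w)).det
  have hd : AnalyticAt ℂ d z := by
    have hent : ∀ i j, AnalyticAt ℂ (fun w => LinearMap.toMatrix b b (m w) i j) z := by
      intro i j
      let L : (E →L[ℂ] E) →L[ℂ] ℂ :=
        ((LinearMap.toContinuousLinearMap (b.coord i)).comp p).comp
          (ContinuousLinearMap.apply ℂ E (b j : E))
      have hL : (fun w => LinearMap.toMatrix b b (m w) i j) =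
          fun w => b.repr (b j) i - L (Ring.inverse (1 + R w + F)) := by
        ext w
        simp [LinearMap.toMatrix_apply, m, L]
      rw [hL]
      exact analyticAt_const.sub ((L.analyticAt _).fun_comp hGi)
    simp only [d, Matrix.det_apply']
    refine Finset.analyticAt_fun_sum _ (fun σ _ => ?_)
    exact analyticAt_const.mul (Finset.analyticAt_fun_prod _ (fun i _ => hent _ _))
  have hiff : ∀ᶠ w in 𝓝 z, (IsUnit (1 + R w) ↔ d w ≠ 0) := by
    filter_upwards [hGu, hUopen.mem_nhds hz] with w hw hwU
    have hdm : d w ≠ 0 ↔ ∀ v, m w v = 0 → v = 0 := by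
      have : d w = LinearMap.det (m w) := LinearMap.det_toMatrix b (m w)
      rw [this, ← isUnit_iff_ne_zero, ← LinearMap.isUnit_iff_isUnit_det,
        LinearMap.isUnit_iff_ker_eq_bot, LinearMap.ker_eq_bot']
    have hm : ∀ v, m w v = v - p (Ring.inverse (1 + R w + F) v) := fun v => by simp [m]
    have hi1 : ∀ x, (1 + R w + F) (Ring.inverse (1 + R w + F) x) = x := fun x => by
      rw [← mul_apply_eq_comp, Ring.mul_inverse_cancel _ hw]; simp
    have hi2 : ∀ x, Ring.inverse (1 + R w + F) ((1 + R w + F) x) = x := fun x => by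
      rw [← mul_apply_eq_comp, Ring.inverse_mul_cancel _ hw]; simp
    have hpF : ∀ x, (p x : E) = F x := fun x => rfl
    rw [hdm]
    constructor
    · intro h v hv
      set x := Ring.inverse (1 + R w + F) (v : E) with hx
      have h1 : v = p x := by
        have := hm v
        rw [hv] at this
        exact (sub_eq_zero.mp this.symm)
      have h2 : (1 + R w) x + F x = v := hi1 v
      rw [← hpF, ← h1] at h2
      have h3 : x = 0 := injective_of_isUnit _ h x (by simpa using h2)
      rw [h1, h3, map_zero]
    · intro h
      apply isUnit_of_injective _ (hRcpt w hwU)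
      intro x hx
      have h1 : (1 + R w + F) x = F x := by
        simp [hx]
      have h2 := hi2 x
      rw [h1] at h2
      have h3 : p x = 0 := h _ (by rw [hm, hpF, h2, sub_self])
      rw [← hpF, h3] at h2
      simpa using h2.symm
  rcases hd.eventually_eq_zero_or_eventually_ne_zero with h | h
  · right
    filter_upwards [h, hiff] with w h1 h2
    rw [h2]; simpa using h1
  · left
    filter_upwards [h, hiff.filter_mono nhdsWithin_le_nhds] with w h1 h2
    exact h2.mpr h1

end AnalyticFredholmAux

/-- **Analytic Fredholm theorem.**  Let `E` be a complex Banach space, `U ⊆ ℂ` a nonempty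
open connected set and `R : U → B(E)` an analytic family of compact operators such that
`id + R λ₀` is injective for some `λ₀ ∈ U`.  Then the set `S` of parameters where
`id + R λ` fails to be invertible is closed in `U` and has no accumulation point in `U`,
and `λ ↦ (id + R λ)⁻¹` is analytic on `U \ S`. -/
theorem analytic_fredholm
    {E : Type*} [NormedAddCommGroup E] [NormedSpace ℂ E] [CompleteSpace E]
    {U : Set ℂ} (hUopen : IsOpen U) (hUne : U.Nonempty) (hUconn : IsConnected U)
    (R : ℂ → E →L[ℂ] E) (hRan : AnalyticOnNhd ℂ R U)
    (hRcpt : ∀ z ∈ U, IsCompactOperator (R z))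
    (hinj : ∃ z₀ ∈ U, Function.Injective ((1 + R z₀ : E →L[ℂ] E) : E → E)) :
    (∀ z ∈ U, z ∈ closure {w ∈ U | ¬ IsUnit (1 + R w)} → ¬ IsUnit (1 + R z)) ∧
    (∀ z ∈ U, ¬ AccPt z (𝓟 {w ∈ U | ¬ IsUnit (1 + R w)})) ∧
    AnalyticOnNhd ℂ (fun z => Ring.inverse (1 + R z))
      (U \ {w ∈ U | ¬ IsUnit (1 + R w)}) := by
  have hopen : ∀ z ∈ U, IsUnit (1 + R z) → ∀ᶠ w in 𝓝 z, IsUnit (1 + R w) := fun z hz hu =>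
    (analyticAt_const.add (hRan z hz)).continuousAt.eventually (Units.isOpen.mem_nhds hu)
  have hloc := AnalyticFredholmAux.local_alternative hUopen R hRan hRcpt
  have hP : ∀ z ∈ U, ∀ᶠ w in 𝓝[≠] z, IsUnit (1 + R w) := by
    obtain ⟨z₀, hz₀, hi⟩ := hinj
    have hu₀ : IsUnit (1 + R z₀) := by
      apply AnalyticFredholmAux.isUnit_of_injective _ (hRcpt z₀ hz₀)
      intro x hx
      apply hi
      simpa using hx
    by_contra hcon
    simp only [not_forall] at hcon
    obtain ⟨z₁, hz₁, hn⟩ := hcon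
    let P : Set ℂ := {z | ∀ᶠ w in 𝓝 z, w ∈ U ∧ (w = z ∨ IsUnit (1 + R w))}
    let Q : Set ℂ := {z | ∀ᶠ w in 𝓝 z, ¬ IsUnit (1 + R w)}
    have hPo : IsOpen P := by
      rw [isOpen_iff_mem_nhds]
      intro z hz
      filter_upwards [hz] with w hw
      rcases hw.2 with rfl | hwu
      · exact hz
      · change ∀ᶠ v in 𝓝 w, v ∈ U ∧ (v = w ∨ IsUnit (1 + R v))
        filter_upwards [hopen w hw.1 hwu, hUopen.mem_nhds hw.1] with v h1 h2
        exact ⟨h2, Or.inr h1⟩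
    have hQo : IsOpen Q := by
      rw [isOpen_iff_mem_nhds]
      intro z hz
      exact eventually_eventually_nhds.mpr hz
    have hcov : U ⊆ P ∪ Q := by
      intro z hz
      rcases hloc z hz with h | h
      · left
        rw [eventually_nhdsWithin_iff] at h
        change ∀ᶠ w in 𝓝 z, w ∈ U ∧ (w = z ∨ IsUnit (1 + R w))
        filter_upwards [h, hUopen.mem_nhds hz] with w h1 h2
        exact ⟨h2, or_iff_not_imp_left.mpr h1⟩
      · exact Or.inr h
    have h0P : z₀ ∈ P := by
      change ∀ᶠ w in 𝓝 z₀, w ∈ U ∧ (w = z₀ ∨ IsUnit (1 + R w))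
      filter_upwards [hopen z₀ hz₀ hu₀, hUopen.mem_nhds hz₀] with v h1 h2
      exact ⟨h2, Or.inr h1⟩
    have h1Q : z₁ ∈ Q := by
      rcases hloc z₁ hz₁ with h | h
      · exact absurd h hn
      · exact h
    obtain ⟨z, hzU, hzP, hzQ⟩ := hUconn.isPreconnected P Q hPo hQo hcov ⟨z₀, hz₀, h0P⟩ ⟨z₁, hz₁, h1Q⟩
    have hzP' : ∀ᶠ w in 𝓝[≠] z, False := by
      rw [eventually_nhdsWithin_iff]
      filter_upwards [hzP, hzQ] with w h1 h2 h3
      exact h2 (h1.2.resolve_left h3)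
    exact hzP'.exists.elim (fun _ h => h)
  refine ⟨?_, ?_, ?_⟩
  · intro z hz hcl hu
    obtain ⟨w, h1, h2⟩ := mem_closure_iff_nhds.mp hcl _ (hopen z hz hu)
    exact h2.2 h1
  · intro z hz hacc
    rw [accPt_iff_frequently_nhdsNE] at hacc
    obtain ⟨w, h1, h2⟩ := (hacc.and_eventually (hP z hz)).exists
    exact h1.2 h2
  · rintro z ⟨hz, hzS⟩
    have hu : IsUnit (1 + R z) := by
      by_contra h
      exact hzS ⟨hz, h⟩
    obtain ⟨u, hu⟩ := hu
    exact AnalyticAt.fun_comp (g := Ring.inverse) (by rw [← hu]; exact analyticAt_inverse u)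
      (analyticAt_const.add (hRan z hz))
end

section
/- Let E be a complex Banach space, U ⊆ ℂ a nonempty open connected set, and R : U → B(E) an analytic family of operators such that R(λ) is a compact operator for every λ ∈ U, and suppose id + R(λ₀) is injective for some λ₀ ∈ U. Let λ₁ ∈ U be a point at which id + R(λ₁) is not invertible. Then there exist an integer N ≥ 1, finite-rank operators F₁, …, F_N ∈ B(E), an open neighbourhood V ⊆ U of λ₁, and an analytic map H : V → B(E), such that for every λ ∈ V with λ ≠ λ₁ the operator id + R(λ) is invertible and (id + R(λ))⁻¹ = H(λ) + Σ_{j=1}^{N} (λ − λ₁)^{−j} F_j. In particular, the singularities of the inverse family are finite dimensional. -/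
open Filter Topology

namespace AFred

variable {E : Type*} [NormedAddCommGroup E] [NormedSpace ℂ E]

theorem finDim_ker (K : E →L[ℂ] E) (hK : IsCompactOperator K) :
    FiniteDimensional ℂ (LinearMap.ker ((1 + K : E →L[ℂ] E) : E →ₗ[ℂ] E)) := by
  set N := LinearMap.ker ((1 + K : E →L[ℂ] E) : E →ₗ[ℂ] E) with hN
  have hmem : ∀ v ∈ N, K v = -v := by
    intro v hv
    have : v + K v = 0 := by simpa [hN] using hv
    exact (neg_eq_of_add_eq_zero_right this).symm
  have hinv : ∀ v ∈ N, (-(K : E →ₗ[ℂ] E)) v ∈ N := by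
    intro v hv
    have := hmem v hv
    simpa [this] using hv
  have hcl : IsClosed (N : Set E) := (1 + K : E →L[ℂ] E).isClosed_ker
  have hc : IsCompactOperator (-(K : E →ₗ[ℂ] E)) := hK.neg
  have h := hc.restrict hinv hcl
  apply FiniteDimensional.of_isCompactOperator_id (𝕜 := ℂ)
  have heq : (id : N → N) = ((-(K : E →ₗ[ℂ] E)).restrict hinv : N → N) := by
    funext v
    ext
    simp [LinearMap.restrict_apply, hmem v v.2]
  rw [heq]
  exact h

section Complete

variable [CompleteSpace E]

theorem isUnit_of_inj (K : E →L[ℂ] E) (hK : IsCompactOperator K)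
    (hinj : Function.Injective (1 + K : E →L[ℂ] E)) : IsUnit (1 + K) := by
  rcases hK.hasEigenvalue_or_mem_resolventSet (μ := -1) (by simp) with h | h
  · exfalso
    obtain ⟨v, hv⟩ := h.exists_hasEigenvector
    have h1 := hv.apply_eq_smul
    have h2 : K v = -v := by simpa using h1
    apply hv.2
    apply hinj
    simp [h2]
  · rw [spectrum.mem_resolventSet_iff] at h
    have := h.neg
    convert this using 1
    simp [add_comm]

theorem exists_rightInv (T : E →L[ℂ] E) (hT : Function.Surjective T)
    [FiniteDimensional ℂ (LinearMap.ker (T : E →ₗ[ℂ] E))] :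
    ∃ S : E →L[ℂ] E, T * S = 1 := by
  obtain ⟨p, hp⟩ := Submodule.ClosedComplemented.of_finiteDimensional
    (LinearMap.ker (T : E →ₗ[ℂ] E))
  let Φ : E →L[ℂ] E × (LinearMap.ker (T : E →ₗ[ℂ] E)) := T.prod p
  have hinj : Function.Injective Φ := by
    rw [injective_iff_map_eq_zero]
    intro x hx
    have h1 : T x = 0 := congrArg Prod.fst hx
    have h2 : p x = 0 := congrArg Prod.snd hx
    have h3 := hp ⟨x, h1⟩
    simp only [h2] at h3
    exact (congrArg Subtype.val h3).symm
  have hsurj : Function.Surjective Φ := by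
    rintro ⟨y, k⟩
    obtain ⟨x, rfl⟩ := hT y
    refine ⟨x - (p x : E) + k, ?_⟩
    have a1 : T (p x : E) = 0 := (p x).2
    have a2 : T (k : E) = 0 := k.2
    simp [Φ, a1, a2, hp]
  let e := ContinuousLinearEquiv.ofBijective Φ (LinearMap.ker_eq_bot.2 hinj)
    (LinearMap.range_eq_top.2 hsurj)
  refine ⟨(e.symm.toContinuousLinearMap).comp (ContinuousLinearMap.inl ℂ _ _), ?_⟩
  ext y
  have : Φ (e.symm (y, 0)) = (y, 0) := e.apply_symm_apply (y, 0)
  exact congrArg Prod.fst this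

theorem isUnit_of_surj (K : E →L[ℂ] E) (hK : IsCompactOperator K)
    (hs : Function.Surjective (1 + K : E →L[ℂ] E)) : IsUnit (1 + K) := by
  have := finDim_ker K hK
  obtain ⟨S, hS⟩ := exists_rightInv (1 + K) hs
  have hS1 : S = 1 + -(K * S) := by
    have : S + K * S = 1 := by simpa [add_mul] using hS
    rw [← this]; abel
  have hcomp : IsCompactOperator (-(K * S) : E →L[ℂ] E) := (hK.comp_clm S).neg
  have hSu : IsUnit S := by
    rw [hS1]
    apply isUnit_of_inj _ hcomp
    rw [← hS1]
    intro x y hxy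
    have := congrArg (1 + K : E →L[ℂ] E) hxy
    rw [← mul_apply_eq_comp, ← mul_apply_eq_comp, hS] at this
    simpa using this
  obtain ⟨u, rfl⟩ := hSu
  have : (1 + K) = ((u⁻¹ : (E →L[ℂ] E)ˣ) : E →L[ℂ] E) := by
    rw [← mul_one ((u⁻¹ : (E →L[ℂ] E)ˣ) : E →L[ℂ] E), ← Units.mul_eq_one_iff_eq_inv.1 hS, mul_one]
  rw [this]
  exact (u⁻¹).isUnit

theorem finDim_range_add {E : Type*} [NormedAddCommGroup E] [NormedSpace ℂ E] {F G : E →L[ℂ] E}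
    (hF : FiniteDimensional ℂ (LinearMap.range (F : E →ₗ[ℂ] E)))
    (hG : FiniteDimensional ℂ (LinearMap.range (G : E →ₗ[ℂ] E))) :
    FiniteDimensional ℂ (LinearMap.range ((F + G : E →L[ℂ] E) : E →ₗ[ℂ] E)) := by
  have : LinearMap.range ((F + G : E →L[ℂ] E) : E →ₗ[ℂ] E) ≤
      LinearMap.range (F : E →ₗ[ℂ] E) ⊔ LinearMap.range (G : E →ₗ[ℂ] E) := by
    rintro _ ⟨x, rfl⟩
    exact Submodule.add_mem_sup ⟨x, rfl⟩ ⟨x, rfl⟩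
  exact Submodule.finiteDimensional_of_le this

theorem exists_finRank (n : ℕ) : ∀ (K : E →L[ℂ] E), IsCompactOperator K →
    Module.finrank ℂ (LinearMap.ker ((1 + K : E →L[ℂ] E) : E →ₗ[ℂ] E)) = n →
    ∃ F : E →L[ℂ] E, FiniteDimensional ℂ (LinearMap.range (F : E →ₗ[ℂ] E)) ∧
      IsUnit (1 + K + F) := by
  induction n using Nat.strong_induction_on with
  | _ n ih =>
  intro K hK hn
  by_cases hu : IsUnit (1 + K)
  · refine ⟨0, ?_, by simpa using hu⟩
    rw [ContinuousLinearMap.toLinearMap_zero, LinearMap.range_zero]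
    infer_instance
  have hni : ¬ Function.Injective (1 + K : E →L[ℂ] E) := fun h => hu (isUnit_of_inj K hK h)
  have hns : ¬ Function.Surjective (1 + K : E →L[ℂ] E) := fun h => hu (isUnit_of_surj K hK h)
  obtain ⟨y, hy⟩ : ∃ y, ∀ x, (1 + K : E →L[ℂ] E) x ≠ y := by
    simpa [Function.Surjective] using hns
  obtain ⟨x, hx, hx0⟩ : ∃ x, (1 + K : E →L[ℂ] E) x = 0 ∧ x ≠ 0 := by
    rw [injective_iff_map_eq_zero] at hni
    push Not at hni
    exact hni
  obtain ⟨f, hf⟩ := SeparatingDual.exists_eq_one (R := ℂ) hx0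
  let G : E →L[ℂ] E := f.smulRight y
  have hGc : IsCompactOperator G :=
    (isCompactOperator_of_locallyCompactSpace_rng
      (ContinuousLinearMap.toSpanSingleton ℂ y)).comp_clm f
  have hGr : FiniteDimensional ℂ (LinearMap.range (G : E →ₗ[ℂ] E)) := by
    have : LinearMap.range (G : E →ₗ[ℂ] E) ≤ Submodule.span ℂ {y} := by
      rintro _ ⟨x, rfl⟩
      exact Submodule.smul_mem _ _ (Submodule.mem_span_singleton_self y)
    exact Submodule.finiteDimensional_of_le this
  have hKG : IsCompactOperator (K + G : E →L[ℂ] E) := hK.add hGc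
  have := finDim_ker K hK
  have hlt : LinearMap.ker ((1 + (K + G) : E →L[ℂ] E) : E →ₗ[ℂ] E) <
      LinearMap.ker ((1 + K : E →L[ℂ] E) : E →ₗ[ℂ] E) := by
    have key : ∀ v, (1 + (K + G) : E →L[ℂ] E) v = 0 → f v = 0 ∧ (1 + K : E →L[ℂ] E) v = 0 := by
      intro v hv
      have h1 : (1 + K : E →L[ℂ] E) v + f v • y = 0 := by
        rw [← hv]; simp [G, add_assoc]
      have h2 : f v = 0 := by
        by_contra h
        apply hy (-(f v)⁻¹ • v)
        rw [map_smul, eq_neg_of_add_eq_zero_left h1]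
        simp [smul_smul, h]
      exact ⟨h2, by simpa [h2] using h1⟩
    refine lt_of_le_of_ne (fun v hv => (key v hv).2) ?_
    intro heq
    have : x ∈ LinearMap.ker ((1 + (K + G) : E →L[ℂ] E) : E →ₗ[ℂ] E) := by
      rw [heq]; exact hx
    have := (key x this).1
    rw [hf] at this
    exact one_ne_zero this
  obtain ⟨F, hF, hFu⟩ := ih _ (hn ▸ Submodule.finrank_lt_finrank_of_lt hlt) (K + G) hKG rfl
  refine ⟨G + F, finDim_range_add hGr hF, ?_⟩
  convert hFu using 1
  abel

/-- Compact perturbation of the identity: invertible minus something factoring through `ℂ^r`. -/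
theorem exists_factor (K : E →L[ℂ] E) (hK : IsCompactOperator K) :
    ∃ (r : ℕ) (P : (Fin r → ℂ) →L[ℂ] E) (Q : E →L[ℂ] (Fin r → ℂ)),
      IsUnit (1 + K + P.comp Q) := by
  obtain ⟨F, hF, hu⟩ := exists_finRank _ K hK rfl
  let e := (Module.finBasis ℂ (LinearMap.range (F : E →ₗ[ℂ] E))).equivFunL
  refine ⟨_, (Submodule.subtypeL _).comp e.symm.toContinuousLinearMap,
    e.toContinuousLinearMap.comp (F.codRestrict (LinearMap.range (F : E →ₗ[ℂ] E)) (fun x => ⟨x, rfl⟩)), ?_⟩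
  convert hu using 2
  ext x
  exact congrArg Subtype.val (e.symm_apply_apply _)

end Complete

/-- `M` has, at `z₁`, an expansion of length `n` with finite rank coefficients. -/
def Good (z₁ : ℂ) : ℕ → (ℂ → E →L[ℂ] E) → Prop
  | 0, M => AnalyticAt ℂ M z₁
  | n + 1, M => ∃ F : E →L[ℂ] E, FiniteDimensional ℂ (LinearMap.range (F : E →ₗ[ℂ] E)) ∧
      ∃ M' : ℂ → E →L[ℂ] E, Good z₁ n M' ∧ ∀ z, M z = F + (z - z₁) • M' z

theorem Good.add {z₁ : ℂ} {n : ℕ} : ∀ {M M' : ℂ → E →L[ℂ] E}, Good z₁ n M → Good z₁ n M' →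
    Good z₁ n (fun z => M z + M' z) := by
  induction n with
  | zero => intro M M' h h'; exact AnalyticAt.add h h'
  | succ n ih =>
    rintro M M' ⟨F, hF, N, hN, h⟩ ⟨F', hF', N', hN', h'⟩
    refine ⟨F + F', finDim_range_add hF hF', _, ih hN hN', fun z => ?_⟩
    simp only [h, h', smul_add]
    abel

theorem analyticAt_dslope {X : Type*} [NormedAddCommGroup X] [NormedSpace ℂ X] {f : ℂ → X} {z : ℂ}
    (hf : AnalyticAt ℂ f z) : AnalyticAt ℂ (dslope f z) z := by
  obtain ⟨p, hp⟩ := hf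
  exact ⟨_, hp.has_fpower_series_dslope_fslope⟩

theorem analyticAt_clm_comp {X Y Z : Type*} [NormedAddCommGroup X] [NormedSpace ℂ X]
    [NormedAddCommGroup Y] [NormedSpace ℂ Y] [NormedAddCommGroup Z] [NormedSpace ℂ Z]
    {f : ℂ → Y →L[ℂ] Z} {g : ℂ → X →L[ℂ] Y} {z : ℂ} (hf : AnalyticAt ℂ f z)
    (hg : AnalyticAt ℂ g z) : AnalyticAt ℂ (fun w => (f w).comp (g w)) z :=
  AnalyticAt.comp (g := fun p : (Y →L[ℂ] Z) × (X →L[ℂ] Y) =>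
    ContinuousLinearMap.compL ℂ X Y Z p.1 p.2) (f := fun w => (f w, g w))
    ((ContinuousLinearMap.compL ℂ X Y Z).analyticAt_bilinear (f z, g z)) (hf.prod hg)

theorem analyticAt_clm_apply {X Y : Type*} [NormedAddCommGroup X] [NormedSpace ℂ X]
    [NormedAddCommGroup Y] [NormedSpace ℂ Y]
    {f : ℂ → X →L[ℂ] Y} {z : ℂ} (hf : AnalyticAt ℂ f z) (x : X) :
    AnalyticAt ℂ (fun w => f w x) z :=
  AnalyticAt.comp (g := ContinuousLinearMap.apply ℂ Y x) (f := f)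
    ((ContinuousLinearMap.apply ℂ Y x).analyticAt (f z)) hf

theorem good_comp {z₁ : ℂ} {r : ℕ} (n : ℕ) : ∀ {P : ℂ → (Fin r → ℂ) →L[ℂ] E}
    {Q : ℂ → E →L[ℂ] (Fin r → ℂ)}, AnalyticAt ℂ P z₁ → AnalyticAt ℂ Q z₁ →
    Good z₁ n (fun z => (P z).comp (Q z)) := by
  induction n with
  | zero => intro P Q hP hQ; exact analyticAt_clm_comp hP hQ
  | succ n ih =>
    intro P Q hP hQ
    refine ⟨(P z₁).comp (Q z₁), ?_, _,
      (ih (analyticAt_dslope hP) hQ).add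
        (ih (P := fun _ => P z₁) analyticAt_const (analyticAt_dslope hQ)), fun z => ?_⟩
    · have : LinearMap.range (((P z₁).comp (Q z₁) : E →L[ℂ] E) : E →ₗ[ℂ] E) ≤
          LinearMap.range (P z₁ : (Fin r → ℂ) →ₗ[ℂ] E) := by
        rintro _ ⟨x, rfl⟩
        exact ⟨Q z₁ x, rfl⟩
      exact Submodule.finiteDimensional_of_le this
    · have h1 := sub_smul_dslope P z₁ z
      have h2 := sub_smul_dslope Q z₁ z
      rw [smul_add, ← ContinuousLinearMap.smul_comp, ← ContinuousLinearMap.comp_smul, h1, h2]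
      ext x
      simp

theorem good_final {z₁ : ℂ} (n : ℕ) : ∀ {M : ℂ → E →L[ℂ] E}, Good z₁ n M →
    ∃ F : ℕ → E →L[ℂ] E, (∀ j, FiniteDimensional ℂ (LinearMap.range (F j : E →ₗ[ℂ] E))) ∧
      ∃ H : ℂ → E →L[ℂ] E, AnalyticAt ℂ H z₁ ∧ ∀ z, z ≠ z₁ →
        (z - z₁) ^ (-(n : ℤ)) • M z =
          H z + ∑ j ∈ Finset.range n, (z - z₁) ^ (-((j : ℤ) + 1)) • F j := by
  induction n with
  | zero =>
    intro M hM
    refine ⟨fun _ => 0, fun j => ?_, M, hM, fun z _ => by simp⟩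
    rw [ContinuousLinearMap.toLinearMap_zero, LinearMap.range_zero]
    infer_instance
  | succ n ih =>
    rintro M ⟨F0, hF0, M', hM', h⟩
    obtain ⟨F, hF, H, hH, hs⟩ := ih hM'
    refine ⟨Function.update F n F0, fun j => ?_, H, hH, fun z hz => ?_⟩
    · by_cases hj : j = n
      · subst hj; rw [Function.update_self]; exact hF0
      · rw [Function.update_of_ne hj]; exact hF j
    · have hz' : z - z₁ ≠ 0 := sub_ne_zero.2 hz
      rw [Finset.sum_range_succ, Finset.sum_congr rfl (g := fun j : ℕ =>
        (z - z₁) ^ (-((j : ℤ) + 1)) • F j), ← add_assoc, ← hs z hz, h, smul_add, smul_smul,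
        ← zpow_add_one₀ hz']
      · simp only [Function.update_self]
        push_cast
        rw [show -((n : ℤ) + 1) + 1 = -n by ring, add_comm]
      · intro j hj
        rw [Function.update_of_ne (Finset.mem_range.1 hj).ne]

theorem analytic_det {r : ℕ} {A : ℂ → Matrix (Fin r) (Fin r) ℂ} {z : ℂ}
    (hA : ∀ i j, AnalyticAt ℂ (fun w => A w i j) z) : AnalyticAt ℂ (fun w => (A w).det) z := by
  simp only [Matrix.det_apply']
  refine Finset.analyticAt_fun_sum _ fun σ _ => ?_
  refine analyticAt_const.fun_mul ?_
  exact Finset.analyticAt_fun_prod _ fun i _ => hA _ _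

theorem exists_adj {r : ℕ} {D : ℂ → (Fin r → ℂ) →L[ℂ] (Fin r → ℂ)} {z : ℂ}
    (hD : AnalyticAt ℂ D z) :
    ∃ (d : ℂ → ℂ) (X : ℂ → (Fin r → ℂ) →L[ℂ] (Fin r → ℂ)), AnalyticAt ℂ d z ∧
      AnalyticAt ℂ X z ∧ ∀ w, D w * X w = d w • 1 ∧ X w * D w = d w • 1 ∧
        ∀ Y : (Fin r → ℂ) →L[ℂ] (Fin r → ℂ), D w * Y = 1 → d w ≠ 0 := by
  let A : ℂ → Matrix (Fin r) (Fin r) ℂ := fun w => LinearMap.toMatrix' (D w : _ →ₗ[ℂ] _)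
  have hA : ∀ i j, AnalyticAt ℂ (fun w => A w i j) z := by
    intro i j
    have h1 : AnalyticAt ℂ (fun w => D w (Pi.single j 1)) z := analyticAt_clm_apply hD _
    have h2 := AnalyticAt.comp (f := fun w => D w (Pi.single j 1))
      ((ContinuousLinearMap.proj (R := ℂ) (φ := fun _ : Fin r => ℂ) i).analyticAt _) h1
    convert h2 using 1
    funext w
    simp [A, LinearMap.toMatrix'_apply]
  have hadj : ∀ i j, AnalyticAt ℂ (fun w => (A w).adjugate i j) z := by
    intro i j
    simp only [Matrix.adjugate_apply]
    apply analytic_det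
    intro k l
    by_cases hk : k = j
    · subst hk; simpa using analyticAt_const
    · simpa [Matrix.updateRow_ne hk] using hA k l
  let L : Matrix (Fin r) (Fin r) ℂ →ₗ[ℂ] ((Fin r → ℂ) →L[ℂ] (Fin r → ℂ)) :=
    LinearMap.toContinuousLinearMap.toLinearMap ∘ₗ (Matrix.toLin' (R := ℂ)).toLinearMap
  have hLmul : ∀ B C, L (B * C) = L B * L C := by
    intro B C
    ext x : 2
    simp [L, Matrix.toLin'_mul]
  have hL1 : L 1 = 1 := by
    ext x : 2
    simp [L]
  have hLA : ∀ w, L (A w) = D w := by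
    intro w
    ext x : 2
    simp [L, A]
  refine ⟨fun w => (A w).det, fun w => L (A w).adjugate, analytic_det hA, ?_, fun w => ⟨?_, ?_, ?_⟩⟩
  · have : (fun w => L (A w).adjugate) = fun w => ∑ i, ∑ j, (A w).adjugate i j •
        L (Matrix.single i j 1) := by
      funext w
      conv_lhs => rw [Matrix.matrix_eq_sum_single (A w).adjugate]
      simp only [map_sum]
      refine Finset.sum_congr rfl fun i _ => Finset.sum_congr rfl fun j _ => ?_
      rw [← map_smul, Matrix.smul_single, smul_eq_mul, mul_one]
    rw [this]
    refine Finset.analyticAt_fun_sum _ fun i _ => Finset.analyticAt_fun_sum _ fun j _ => ?_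
    exact (hadj i j).smul analyticAt_const
  · rw [← hLA, ← hLmul, Matrix.mul_adjugate, map_smul, hL1]
  · rw [← hLA, ← hLmul, Matrix.adjugate_mul, map_smul, hL1]
  · intro Y hY h0
    have h1 : (D w : (Fin r → ℂ) →ₗ[ℂ] (Fin r → ℂ)) * (Y : (Fin r → ℂ) →ₗ[ℂ] (Fin r → ℂ)) = 1 := by
      ext1 x
      exact congrArg (fun T : (Fin r → ℂ) →L[ℂ] (Fin r → ℂ) =>
        (T : (Fin r → ℂ) →ₗ[ℂ] (Fin r → ℂ)) ∘ₗ LinearMap.single ℂ _ x) hY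
    have h2 := congrArg LinearMap.det h1
    rw [map_mul, map_one, ← LinearMap.det_toMatrix'] at h2
    change (A w).det * _ = 1 at h2
    simp only [] at h0
    rw [h0, zero_mul] at h2
    exact zero_ne_one h2

theorem local_inv {W : Type*} [NormedAddCommGroup W] [NormedSpace ℂ W]
    {T a b : E →L[ℂ] E} {P : W →L[ℂ] E} {Q : E →L[ℂ] W} {X : W →L[ℂ] W} {d : ℂ}
    (hT : a = T + P.comp Q) (hab : a * b = 1) (hba : b * a = 1) (hd : d ≠ 0)
    (hX : (1 - Q.comp (b.comp P)) * X = d • 1) (hX' : X * (1 - Q.comp (b.comp P)) = d • 1) :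
    IsUnit T ∧ Ring.inverse T = b + d⁻¹ • (b.comp (P.comp X)).comp (Q.comp b) := by
  have hT' : ∀ x, T x = a x - P (Q x) := by intro x; simp [hT]
  have hab' : ∀ x, a (b x) = x := fun x => congrArg (fun S : E →L[ℂ] E => S x) hab
  have hba' : ∀ x, b (a x) = x := fun x => congrArg (fun S : E →L[ℂ] E => S x) hba
  have h1 : ∀ x, Q (b (P (X x))) = X x - d • x := by
    intro x
    have : X x - Q (b (P (X x))) = d • x := congrArg (fun S : W →L[ℂ] W => S x) hX
    rw [← this]; abel
  have h2 : ∀ x, X (Q (b (P x))) = X x - d • x := by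
    intro x
    have : X (x - Q (b (P x))) = d • x := congrArg (fun S : W →L[ℂ] W => S x) hX'
    rw [← this, map_sub]; abel
  let u : (E →L[ℂ] E)ˣ := ⟨T, b + d⁻¹ • (b.comp (P.comp X)).comp (Q.comp b), by
    ext x
    simp [hT', hab', h1, hd, smul_sub, smul_smul], by
    ext x
    simp [hT', hba', h2, hd, smul_sub, smul_smul]⟩
  exact ⟨u.isUnit, Ring.inverse_unit u⟩

theorem local_nonzero {W : Type*} [NormedAddCommGroup W] [NormedSpace ℂ W]
    {T a b : E →L[ℂ] E} {P : W →L[ℂ] E} {Q : E →L[ℂ] W}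
    (hT : a = T + P.comp Q) (hba : b * a = 1) (hu : IsUnit T) :
    ∃ Y, (1 - Q.comp (b.comp P)) * Y = 1 := by
  obtain ⟨c, hTc⟩ := hu.exists_right_inv
  have hTc' : ∀ x, T (c x) = x := fun x => congrArg (fun S : E →L[ℂ] E => S x) hTc
  have hba' : ∀ x, b (a x) = x := fun x => congrArg (fun S : E →L[ℂ] E => S x) hba
  refine ⟨1 + Q.comp (c.comp P), ?_⟩
  have hPQ : ∀ x, P (Q x) = a x - T x := by intro x; simp [hT]
  ext x
  simp [hPQ, hba', hTc']

variable [CompleteSpace E]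

theorem local_struct {R : ℂ → E →L[ℂ] E} {z : ℂ} (hR : AnalyticAt ℂ R z)
    (hK : IsCompactOperator (R z)) :
    ∃ (r : ℕ) (d : ℂ → ℂ) (b : ℂ → E →L[ℂ] E) (P : ℂ → (Fin r → ℂ) →L[ℂ] E)
      (Q : ℂ → E →L[ℂ] (Fin r → ℂ)), AnalyticAt ℂ d z ∧ AnalyticAt ℂ b z ∧ AnalyticAt ℂ P z ∧
      AnalyticAt ℂ Q z ∧ ∀ᶠ w in 𝓝 z, (IsUnit (1 + R w) ↔ d w ≠ 0) ∧
        (d w ≠ 0 → Ring.inverse (1 + R w) = b w + (d w)⁻¹ • (P w).comp (Q w)) := by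
  obtain ⟨r, P, Q, hu⟩ := exists_factor (R z) hK
  let a : ℂ → E →L[ℂ] E := fun w => 1 + R w + P.comp Q
  have ha : AnalyticAt ℂ a z := (analyticAt_const.add hR).add analyticAt_const
  let b : ℂ → E →L[ℂ] E := fun w => Ring.inverse (a w)
  have hb : AnalyticAt ℂ b z := by
    have h : AnalyticAt ℂ (Ring.inverse : (E →L[ℂ] E) → _) (a z) := by
      obtain ⟨u, hu'⟩ := hu
      have := analyticAt_inverse (𝕜 := ℂ) u
      rwa [hu'] at this
    exact h.comp ha
  have hau : ∀ᶠ w in 𝓝 z, IsUnit (a w) :=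
    ha.continuousAt.eventually (Units.isOpen.mem_nhds hu)
  have hbP : AnalyticAt ℂ (fun w => (b w).comp P) z := analyticAt_clm_comp hb analyticAt_const
  have hD : AnalyticAt ℂ (fun w => 1 - Q.comp ((b w).comp P)) z :=
    analyticAt_const.sub (analyticAt_clm_comp analyticAt_const hbP)
  obtain ⟨d, X, hd, hX, h⟩ := exists_adj hD
  refine ⟨r, d, b, fun w => (b w).comp (P.comp (X w)), fun w => Q.comp (b w), hd, hb,
    analyticAt_clm_comp hb (analyticAt_clm_comp analyticAt_const hX),
    analyticAt_clm_comp analyticAt_const hb, ?_⟩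
  filter_upwards [hau] with w hw
  obtain ⟨h1, h2, h3⟩ := h w
  have hab : a w * b w = 1 := Ring.mul_inverse_cancel _ hw
  have hba : b w * a w = 1 := Ring.inverse_mul_cancel _ hw
  refine ⟨⟨fun hT => ?_, fun h0 => (local_inv rfl hab hba h0 h1 h2).1⟩,
    fun h0 => (local_inv rfl hab hba h0 h1 h2).2⟩
  obtain ⟨Y, hY⟩ := local_nonzero (T := 1 + R w) rfl hba hT
  exact h3 Y hY

theorem eventually_unit {U : Set ℂ} (hUopen : IsOpen U) (hUconn : IsConnected U)
    {R : ℂ → E →L[ℂ] E} (hRan : AnalyticOnNhd ℂ R U)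
    (hRcpt : ∀ z ∈ U, IsCompactOperator (R z))
    (hinj : ∃ z₀ ∈ U, Function.Injective ((1 + R z₀ : E →L[ℂ] E) : E → E))
    {z₁ : ℂ} (hz₁ : z₁ ∈ U) : ∀ᶠ z in 𝓝[≠] z₁, IsUnit (1 + R z) := by
  let S : Set ℂ := {z | ∀ᶠ w in 𝓝[≠] z, IsUnit (1 + R w)}
  let S' : Set ℂ := {z | ∀ᶠ w in 𝓝 z, ¬ IsUnit (1 + R w)}
  have hdich : ∀ z ∈ U, z ∈ S ∨ z ∈ S' := by
    intro z hz
    obtain ⟨r, d, b, P, Q, hd, -, -, -, h⟩ := local_struct (hRan z hz) (hRcpt z hz)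
    rcases hd.eventually_eq_zero_or_eventually_ne_zero with h0 | h0
    · right
      filter_upwards [h, h0] with w hw hw0
      rw [hw.1]; simpa using hw0
    · left
      filter_upwards [h0, h.filter_mono nhdsWithin_le_nhds] with w hw0 hw
      exact hw.1.2 hw0
  have hS : IsOpen S := by
    rw [isOpen_iff_mem_nhds]
    intro z hz
    have h1 := eventually_eventually_nhdsWithin.2 hz
    rw [eventually_nhdsWithin_iff] at h1
    filter_upwards [h1] with w hw
    by_cases hwz : w = z
    · subst hwz; exact hz
    · have := hw hwz
      have h2 : 𝓝[{z}ᶜ] w = 𝓝 w := isOpen_compl_singleton.nhdsWithin_eq hwz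
      rw [h2] at this
      exact this.filter_mono nhdsWithin_le_nhds
  have hS' : IsOpen S' := by
    rw [isOpen_iff_mem_nhds]
    intro z hz
    exact eventually_eventually_nhds.2 hz
  have hdisj : Disjoint S S' := by
    rw [Set.disjoint_left]
    intro z hz hz'
    have h2 : ∀ᶠ w in 𝓝[≠] z, ¬ IsUnit (1 + R w) := Filter.Eventually.filter_mono nhdsWithin_le_nhds hz'
    obtain ⟨w, hw, hw'⟩ := (Filter.Eventually.and (show ∀ᶠ w in 𝓝[≠] z, IsUnit (1 + R w) from hz) h2).exists
    exact hw' hw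
  obtain ⟨z₀, hz₀, hi⟩ := hinj
  have hz₀S : z₀ ∈ S := by
    have hu := isUnit_of_inj _ (hRcpt z₀ hz₀) hi
    have hc : ContinuousAt (fun w => 1 + R w) z₀ :=
      continuousAt_const.add (hRan z₀ hz₀).continuousAt
    have := hc.eventually (Units.isOpen.mem_nhds hu)
    exact Filter.Eventually.filter_mono nhdsWithin_le_nhds this
  exact hUconn.isPreconnected.subset_left_of_subset_union hS hS' hdisj hdich ⟨z₀, hz₀, hz₀S⟩ hz₁

end AFred

/-- Finite-dimensional singularities in the analytic Fredholm theorem: near a point `λ₁`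
where `id + R λ₁` is not invertible, the inverse family `(id + R λ)⁻¹` is the sum of a
holomorphic family and finitely many finite-rank Laurent coefficients
`(λ − λ₁)^{-j} F_j`, `1 ≤ j ≤ N`. -/
theorem analytic_fredholm_finite_dim_singularities
    {E : Type*} [NormedAddCommGroup E] [NormedSpace ℂ E] [CompleteSpace E]
    {U : Set ℂ} (hUopen : IsOpen U) (hUne : U.Nonempty) (hUconn : IsConnected U)
    (R : ℂ → E →L[ℂ] E) (hRan : AnalyticOnNhd ℂ R U)
    (hRcpt : ∀ z ∈ U, IsCompactOperator (R z))
    (hinj : ∃ z₀ ∈ U, Function.Injective ((1 + R z₀ : E →L[ℂ] E) : E → E))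
    {z₁ : ℂ} (hz₁ : z₁ ∈ U) (hsing : ¬ IsUnit (1 + R z₁)) :
    ∃ (N : ℕ), 1 ≤ N ∧ ∃ (F : Fin N → E →L[ℂ] E),
      (∀ j, FiniteDimensional ℂ (LinearMap.range (F j : E →ₗ[ℂ] E))) ∧
      ∃ (V : Set ℂ), IsOpen V ∧ z₁ ∈ V ∧ V ⊆ U ∧
        ∃ (H : ℂ → E →L[ℂ] E), AnalyticOnNhd ℂ H V ∧
          ∀ z ∈ V, z ≠ z₁ →
            IsUnit (1 + R z) ∧
            Ring.inverse (1 + R z)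
              = H z + ∑ j : Fin N, ((z - z₁) ^ (-(((j : ℕ) : ℤ) + 1))) • F j := by
  have hev := AFred.eventually_unit hUopen hUconn hRan hRcpt hinj hz₁
  obtain ⟨r, d, b, P, Q, hd, hb, hP, hQ, h⟩ :=
    AFred.local_struct (hRan z₁ hz₁) (hRcpt z₁ hz₁)
  have hd1 : d z₁ = 0 := by
    by_contra h0
    exact hsing (h.self_of_nhds.1.2 h0)
  have hnz : ¬ ∀ᶠ z in 𝓝 z₁, d z = 0 := by
    intro h0
    obtain ⟨w, ⟨hw, hw0⟩, hwu⟩ :=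
      (((h.and h0).filter_mono nhdsWithin_le_nhds).and hev).exists
    exact hw.1.1 hwu hw0
  obtain ⟨n, g, hg, hg0, hdg⟩ := hd.exists_eventuallyEq_pow_smul_nonzero_iff.2 hnz
  have hn : 1 ≤ n := by
    by_contra hn
    have hn0 : n = 0 := by omega
    have := hdg.self_of_nhds
    rw [hd1, hn0] at this
    simp at this
    exact hg0 this.symm
  have hP' : AnalyticAt ℂ (fun z => (g z)⁻¹ • P z) z₁ := (hg.inv hg0).smul hP
  obtain ⟨F, hF, H, hH, hs⟩ := AFred.good_final n (AFred.good_comp n hP' hQ)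
  have hHb : AnalyticAt ℂ (fun z => b z + H z) z₁ := hb.add hH
  have hfin : ∀ᶠ z in 𝓝 z₁, z ∈ U ∧ AnalyticAt ℂ (fun z => b z + H z) z ∧ (z ≠ z₁ →
      IsUnit (1 + R z) ∧ Ring.inverse (1 + R z)
        = (b z + H z) + ∑ j : Fin n, ((z - z₁) ^ (-(((j : ℕ) : ℤ) + 1))) • F j) := by
    filter_upwards [hUopen.mem_nhds hz₁, hHb.eventually_analyticAt, h, hdg,
      eventually_nhdsWithin_iff.1 hev] with z h1 h2 h3 h4 h5
    refine ⟨h1, h2, fun hz => ⟨h5 hz, ?_⟩⟩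
    rw [h3.2 (h3.1.1 (h5 hz)), Fin.sum_univ_eq_sum_range
      (fun j : ℕ => (z - z₁) ^ (-((j : ℤ) + 1)) • F j) n, add_assoc, ← hs z hz, h4,
      smul_eq_mul, mul_inv, mul_smul, ContinuousLinearMap.smul_comp, zpow_neg, zpow_natCast]
  obtain ⟨V, hV, hVo, hzV⟩ := eventually_nhds_iff.1 hfin
  exact ⟨n, hn, fun j => F j, fun j => hF j, V, hVo, hzV, fun z hz => (hV z hz).1,
    fun z => b z + H z, fun z hz => (hV z hz).2.1, fun z hz => (hV z hz).2.2⟩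
end

section
/- Let E be a complex Banach space, U ⊆ ℂ a nonempty open connected set, and R : U → B(E) an analytic family of operators such that R(λ) is a compact operator for every λ ∈ U, and suppose id + R(λ₀) is injective for some λ₀ ∈ U. Then the function λ ↦ Ring.inverse (id + R(λ)) (i.e., the function equal to (id + R(λ))⁻¹ when id + R(λ) is a unit of B(E) and equal to 0 otherwise) is meromorphic on U. -/
open Filter Topology

section AnalyticFredholm
variable {E : Type*} [NormedAddCommGroup E] [NormedSpace ℂ E] [CompleteSpace E]

set_option linter.unusedSectionVars false

/-- Fredholm alternative: injective identity plus compact is a unit. -/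
lemma afm_isUnit_of_injective {K : E →L[ℂ] E} (hK : IsCompactOperator K)
    (h : Function.Injective ((1 + K : E →L[ℂ] E) : E → E)) : IsUnit (1 + K) := by
  rcases hK.hasEigenvalue_or_mem_resolventSet (μ := (-1 : ℂ)) (by simp) with h1 | h1
  · obtain ⟨v, hv⟩ := h1.exists_hasEigenvector
    exfalso
    apply hv.2
    apply h
    have : K v = (-1 : ℂ) • v := hv.apply_eq_smul
    simp [this]
  · rw [spectrum.mem_resolventSet_iff, ← IsUnit.neg_iff] at h1
    convert! h1 using 1
    ext x
    simp [add_comm]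

lemma afm_finite_ker {K : E →L[ℂ] E} (hK : IsCompactOperator K) :
    FiniteDimensional ℂ (1 + K : E →L[ℂ] E).ker := by
  set N := (1 + K : E →L[ℂ] E).ker with hN
  have hKN : ∀ v ∈ N, K v = -v := by
    intro v hv
    have : v + K v = 0 := by simpa [hN] using hv
    exact (neg_eq_of_add_eq_zero_right this).symm
  have hcl : IsClosed (N : Set E) := (1 + K : E →L[ℂ] E).isClosed_ker
  have h1 : ∀ v ∈ N, (K : E →ₗ[ℂ] E) v ∈ N := by
    intro v hv
    have := hKN v hv
    simp only [ContinuousLinearMap.coe_coe, this]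
    exact N.neg_mem hv
  have h2 := (IsCompactOperator.restrict (f := (K : E →ₗ[ℂ] E)) hK h1 hcl).neg
  apply FiniteDimensional.of_isCompactOperator_id
  convert! h2 using 1
  ext v
  have := hKN v v.2
  simp [this]

/-- Surjective identity plus compact is injective. -/
lemma afm_injective_of_surjective {K : E →L[ℂ] E} (hK : IsCompactOperator K)
    (h : Function.Surjective ((1 + K : E →L[ℂ] E) : E → E)) :
    Function.Injective ((1 + K : E →L[ℂ] E) : E → E) := by
  have hfin := afm_finite_ker hK
  obtain ⟨P, hP⟩ := Submodule.ClosedComplemented.of_finiteDimensional (𝕜 := ℂ)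
    (1 + K : E →L[ℂ] E).ker
  have hPs : P.range = ⊤ := LinearMap.range_eq_top.2 fun n => ⟨n, hP n⟩
  have hcomp : IsCompl (1 + K : E →L[ℂ] E).ker P.ker := LinearMap.isCompl_of_proj hP
  let e := (1 + K : E →L[ℂ] E).equivProdOfSurjectiveOfIsCompl P
    (LinearMap.range_eq_top.2 h) hPs hcomp
  let S : E →L[ℂ] E := (e.symm : (E × (1 + K : E →L[ℂ] E).ker) →L[ℂ] E) ∘L
    ContinuousLinearMap.inl ℂ E (1 + K : E →L[ℂ] E).ker
  have hS : (1 + K) * S = 1 := by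
    ext y
    have : e (S y) = (y, 0) := e.apply_symm_apply (y, 0)
    have h2 : (e (S y)).1 = (1 + K : E →L[ℂ] E) (S y) := rfl
    rw [this] at h2
    simpa using h2.symm
  have hS2 : S = 1 + (-(K * S)) := by
    rw [add_mul, one_mul] at hS
    rw [← hS]; abel
  have hcS : IsCompactOperator (-(K * S) : E →L[ℂ] E) := (hK.comp_clm S).neg
  have hSinj : Function.Injective (S : E → E) := by
    intro a b hab
    have ha : ((1 + K) * S) a = ((1 + K) * S) b := by
      simp only [mul_apply_eq_comp, hab]
    simpa [hS] using ha
  have hSu : IsUnit S := by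
    rw [hS2] at hSinj ⊢
    exact afm_isUnit_of_injective hcS hSinj
  have hu : IsUnit (1 + K) := by
    obtain ⟨u, hu⟩ := hSu
    have : (1 + K) = ((u⁻¹ : (E →L[ℂ] E)ˣ) : E →L[ℂ] E) := by
      rw [← hu] at hS
      exact eq_comm.1 (Units.inv_eq_of_mul_eq_one_left hS)
    rw [this]; exact Units.isUnit _
  exact (ContinuousLinearMap.isUnit_iff_bijective.1 hu).1

lemma afm_compact_rank_one (f : StrongDual ℂ E) (y : E) :
    IsCompactOperator (f.smulRight y : E →L[ℂ] E) := by
  have h : IsCompactOperator (f : E → ℂ) :=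
    isCompactOperator_of_locallyCompactSpace_dom f
  exact h.clm_comp (ContinuousLinearMap.toSpanSingleton ℂ y)

lemma afm_exists_finite_rank (n : ℕ) : ∀ (K : E →L[ℂ] E), IsCompactOperator K →
    Module.finrank ℂ (1 + K : E →L[ℂ] E).ker ≤ n →
    ∃ (m : ℕ) (f : Fin m → StrongDual ℂ E) (y : Fin m → E),
      IsUnit (1 + K + ∑ i, (f i).smulRight (y i)) := by
  induction n with
  | zero =>
    intro K hK hn
    have := afm_finite_ker hK
    refine ⟨0, Fin.elim0, Fin.elim0, ?_⟩
    rw [Finset.univ_eq_empty, Finset.sum_empty, add_zero]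
    apply afm_isUnit_of_injective hK
    exact LinearMap.ker_eq_bot.1 (Submodule.finrank_eq_zero.1 (Nat.le_zero.1 hn))
  | succ n ih =>
    intro K hK hn
    have := afm_finite_ker hK
    by_cases hi : Function.Injective ((1 + K : E →L[ℂ] E) : E → E)
    · refine ⟨0, Fin.elim0, Fin.elim0, ?_⟩
      rw [Finset.univ_eq_empty, Finset.sum_empty, add_zero]
      exact afm_isUnit_of_injective hK hi
    have hs : ¬ Function.Surjective ((1 + K : E →L[ℂ] E) : E → E) :=
      fun h => hi (afm_injective_of_surjective hK h)
    simp only [Function.Surjective, not_forall] at hs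
    obtain ⟨y, hy⟩ := hs
    have : ∃ v ∈ (1 + K : E →L[ℂ] E).ker, v ≠ 0 := by
      apply Submodule.exists_mem_ne_zero_of_ne_bot
      intro hb
      exact hi (LinearMap.ker_eq_bot.1 hb)
    obtain ⟨v, hv, hv0⟩ := this
    obtain ⟨f, hf⟩ := SeparatingDual.exists_eq_one (R := ℂ) hv0
    have hK' : IsCompactOperator (K + f.smulRight y : E →L[ℂ] E) :=
      hK.add (afm_compact_rank_one f y)
    have hlt : (1 + (K + f.smulRight y) : E →L[ℂ] E).ker < (1 + K : E →L[ℂ] E).ker := by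
      have key : ∀ x ∈ (1 + (K + f.smulRight y) : E →L[ℂ] E).ker, f x = 0 := by
        intro x hx
        have hx' : x + (K x + f x • y) = 0 := by simpa using hx
        by_contra h0
        apply hy
        refine ⟨-(f x)⁻¹ • x, ?_⟩
        have h1 : (1 + K : E →L[ℂ] E) x = - (f x • y) := by
          simp only [add_apply, one_apply_eq_self]
          rw [← add_assoc] at hx'
          exact eq_neg_of_add_eq_zero_left hx'
        rw [map_smul, h1]
        simp [smul_smul, h0]
      refine lt_of_le_of_ne ?_ ?_
      · intro x hx
        have h0 := key x hx
        have hx' : x + (K x + f x • y) = 0 := by simpa using hx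
        simpa [h0] using hx'
      · intro he
        have := key v (he ▸ hv)
        simp [hf] at this
    obtain ⟨m, g, z, hu⟩ := ih (K + f.smulRight y) hK' (by
      have := Submodule.finrank_lt_finrank_of_lt hlt
      omega)
    refine ⟨m + 1, Fin.cons f g, Fin.cons y z, ?_⟩
    rw [Fin.sum_univ_succ]
    simpa [add_assoc] using hu

lemma afm_det_analytic {m : ℕ} {M : ℂ → Matrix (Fin m) (Fin m) ℂ} {z₁ : ℂ}
    (hM : ∀ i j, AnalyticAt ℂ (fun z => M z i j) z₁) :
    AnalyticAt ℂ (fun z => (M z).det) z₁ := by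
  simp only [Matrix.det_apply']
  refine Finset.analyticAt_fun_sum _ fun σ _ => ?_
  refine analyticAt_const.mul ?_
  exact Finset.analyticAt_fun_prod _ fun i _ => hM _ _

lemma afm_adjugate_analytic {m : ℕ} {M : ℂ → Matrix (Fin m) (Fin m) ℂ} {z₁ : ℂ}
    (hM : ∀ i j, AnalyticAt ℂ (fun z => M z i j) z₁) (i j : Fin m) :
    AnalyticAt ℂ (fun z => (M z).adjugate i j) z₁ := by
  simp only [Matrix.adjugate_apply]
  refine afm_det_analytic fun k l => ?_
  simp only [Matrix.updateRow_apply]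
  by_cases h : k = j
  · simp only [h, if_true]; exact analyticAt_const
  · simp only [h, if_false]; exact hM _ _

/-- The finite matrix controlling invertibility. -/
noncomputable def afmMat {m : ℕ} (f : Fin m → StrongDual ℂ E) (y : Fin m → E) (G : E →L[ℂ] E) :
    Matrix (Fin m) (Fin m) ℂ :=
  1 - Matrix.of fun i j => f i (G (y j))

lemma afmMat_mulVec {m : ℕ} (f : Fin m → StrongDual ℂ E) (y : Fin m → E) (G : E →L[ℂ] E)
    (v : Fin m → ℂ) (i : Fin m) :
    (afmMat f y G).mulVec v i = v i - f i (G (∑ j, v j • y j)) := by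
  rw [afmMat, Matrix.sub_mulVec, Matrix.one_mulVec]
  simp [Matrix.mulVec, dotProduct, map_sum, mul_comm]

lemma afm_not_isUnit {m : ℕ} {f : Fin m → StrongDual ℂ E} {y : Fin m → E}
    {A G : E →L[ℂ] E} (hG : (A + ∑ i, (f i).smulRight (y i)) * G = 1)
    (hd : (afmMat f y G).det = 0) : ¬ IsUnit A := by
  intro hA
  obtain ⟨v, hv0, hv⟩ := Matrix.exists_mulVec_eq_zero_iff.2 hd
  set x := G (∑ j, v j • y j) with hx
  have hfx : ∀ i, f i x = v i := by
    intro i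
    have := congrFun hv i
    rw [afmMat_mulVec] at this
    exact (sub_eq_zero.1 this).symm
  have h1 := DFunLike.congr_fun hG (∑ j, v j • y j)
  have h2 : A x + ∑ i, f i x • y i = ∑ j, v j • y j := by
    rw [mul_apply_eq_comp, ← hx] at h1
    simpa [sum_apply] using h1
  simp only [hfx] at h2
  have h3 : A x = A 0 := by simpa using h2
  have h4 : x = 0 := (ContinuousLinearMap.isUnit_iff_bijective.1 hA).1 h3
  apply hv0
  ext i
  rw [← hfx i, h4]; simp

/-- Woodbury formula. -/
noncomputable def afmInv {m : ℕ} (f : Fin m → StrongDual ℂ E) (y : Fin m → E) (G : E →L[ℂ] E) :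
    E →L[ℂ] E :=
  G + ∑ i, ∑ j, ((afmMat f y G).det⁻¹ * (afmMat f y G).adjugate i j) •
    (G * (f j).smulRight (y i) * G)

lemma afmInv_apply {m : ℕ} (f : Fin m → StrongDual ℂ E) (y : Fin m → E) (G : E →L[ℂ] E) (x : E) :
    afmInv f y G x = G x +
      G (∑ i, ((afmMat f y G)⁻¹.mulVec (fun j => f j (G x))) i • y i) := by
  simp [afmInv, sum_apply, Matrix.inv_def, Ring.inverse_eq_inv',
    Matrix.mulVec, dotProduct, map_sum, Finset.sum_smul, smul_smul, Finset.mul_sum, mul_assoc]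

lemma afm_isUnit {m : ℕ} {f : Fin m → StrongDual ℂ E} {y : Fin m → E}
    {A G : E →L[ℂ] E} (hG : (A + ∑ i, (f i).smulRight (y i)) * G = 1)
    (hG' : G * (A + ∑ i, (f i).smulRight (y i)) = 1)
    (hd : (afmMat f y G).det ≠ 0) : IsUnit A ∧ Ring.inverse A = afmInv f y G := by
  have hdu : IsUnit (afmMat f y G).det := isUnit_iff_ne_zero.2 hd
  have e1 : ∀ x, A (G x) = x - ∑ i, f i (G x) • y i := by
    intro x
    have := DFunLike.congr_fun hG x
    have h2 : A (G x) + ∑ i, f i (G x) • y i = x := by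
      simpa [sum_apply] using this
    exact eq_sub_of_add_eq h2
  have e2 : ∀ x, G (A x) = x - G (∑ i, f i x • y i) := by
    intro x
    have := DFunLike.congr_fun hG' x
    have h2 : G (A x) + G (∑ i, f i x • y i) = x := by
      simpa [sum_apply] using this
    exact eq_sub_of_add_eq h2
  have hl : A * afmInv f y G = 1 := by
    ext x
    simp only [mul_apply_eq_comp, one_apply_eq_self, afmInv_apply, map_add]
    set w : Fin m → ℂ := fun j => f j (G x) with hw
    set c := (afmMat f y G)⁻¹.mulVec w with hc
    have hMc : (afmMat f y G).mulVec c = w := by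
      rw [hc, Matrix.mulVec_mulVec, Matrix.mul_nonsing_inv _ hdu, Matrix.one_mulVec]
    rw [e1, e1]
    have : ∀ i, f i (G (∑ i, c i • y i)) = c i - w i := by
      intro i
      have := congrFun hMc i
      rw [afmMat_mulVec] at this
      rw [← this]; ring
    simp only [this, sub_smul, Finset.sum_sub_distrib]
    simp only [hw]
    abel
  have hr : afmInv f y G * A = 1 := by
    ext x
    simp only [mul_apply_eq_comp, one_apply_eq_self, afmInv_apply]
    have : (fun j => f j (G (A x))) = (afmMat f y G).mulVec (fun j => f j x) := by
      ext j
      rw [afmMat_mulVec, e2, map_sub]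
    rw [this, Matrix.mulVec_mulVec, Matrix.nonsing_inv_mul _ hdu, Matrix.one_mulVec, e2]
    abel
  let u : (E →L[ℂ] E)ˣ := ⟨A, afmInv f y G, hl, hr⟩
  exact ⟨u.isUnit, Ring.inverse_unit u⟩

lemma afm_local {A : ℂ → E →L[ℂ] E} {z₁ : ℂ} (hA : AnalyticAt ℂ A z₁) {m : ℕ}
    {f : Fin m → StrongDual ℂ E} {y : Fin m → E}
    (hu : IsUnit (A z₁ + ∑ i, (f i).smulRight (y i))) :
    (∀ᶠ z in 𝓝[≠] z₁, ¬ IsUnit (A z)) ∨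
    ((∀ᶠ z in 𝓝[≠] z₁, IsUnit (A z)) ∧ MeromorphicAt (fun z => Ring.inverse (A z)) z₁) := by
  set B : ℂ → E →L[ℂ] E := fun z => A z + ∑ i, (f i).smulRight (y i) with hB
  have hBa : AnalyticAt ℂ B z₁ := hA.add analyticAt_const
  set G : ℂ → E →L[ℂ] E := fun z => Ring.inverse (B z) with hGdef
  have hGa : AnalyticAt ℂ G z₁ := by
    have h1 : AnalyticAt ℂ Ring.inverse (B z₁) := analyticAt_inverse (𝕜 := ℂ) hu.unit
    exact h1.comp hBa
  have hBu : ∀ᶠ z in 𝓝 z₁, IsUnit (B z) :=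
    hBa.continuousAt.eventually (Units.isOpen.mem_nhds hu)
  have hMa : ∀ i j, AnalyticAt ℂ (fun z => afmMat f y (G z) i j) z₁ := by
    intro i j
    simp only [afmMat, Matrix.sub_apply, Matrix.of_apply]
    refine analyticAt_const.sub ?_
    have h2 : AnalyticAt ℂ (fun z => G z (y j)) z₁ :=
      ((ContinuousLinearMap.apply ℂ E (y j)).analyticAt _).comp hGa
    exact (ContinuousLinearMap.analyticAt (f i) _).comp h2
  have hda := afm_det_analytic hMa
  rcases hda.eventually_eq_zero_or_eventually_ne_zero with h0 | h0
  · left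
    filter_upwards [(h0.and hBu).filter_mono nhdsWithin_le_nhds] with z hz
    exact afm_not_isUnit (Ring.mul_inverse_cancel _ hz.2) hz.1
  · right
    have key : ∀ᶠ z in 𝓝[≠] z₁, IsUnit (A z) ∧ Ring.inverse (A z) = afmInv f y (G z) := by
      filter_upwards [h0, hBu.filter_mono nhdsWithin_le_nhds] with z hz hz'
      exact afm_isUnit (Ring.mul_inverse_cancel _ hz') (Ring.inverse_mul_cancel _ hz') hz
    refine ⟨key.mono fun z hz => hz.1, ?_⟩
    have hmer : MeromorphicAt (fun z => afmInv f y (G z)) z₁ := by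
      unfold afmInv
      refine hGa.meromorphicAt.fun_add ?_
      refine MeromorphicAt.fun_sum fun i _ => MeromorphicAt.fun_sum fun j _ => ?_
      refine MeromorphicAt.fun_smul ?_ ?_
      · exact hda.meromorphicAt.fun_inv.fun_mul (afm_adjugate_analytic hMa i j).meromorphicAt
      · exact ((hGa.mul analyticAt_const).mul hGa).meromorphicAt
    exact hmer.congr (key.mono fun z hz => hz.2.symm)

lemma afm_isOpen (p : ℂ → Prop) : IsOpen {z | ∀ᶠ w in 𝓝[≠] z, p w} := by
  rw [isOpen_iff_mem_nhds]
  intro z hz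
  have h1 : ∀ᶠ w in 𝓝 z, w ≠ z → p w := eventually_nhdsWithin_iff.1 hz
  filter_upwards [eventually_eventually_nhds.2 h1] with x hx
  by_cases hxz : x = z
  · rw [hxz]; exact hz
  · have h2 : ∀ᶠ w in 𝓝 x, p w := by
      filter_upwards [hx, isOpen_ne.mem_nhds hxz] with w hw hne using hw hne
    exact h2.filter_mono nhdsWithin_le_nhds

end AnalyticFredholm

theorem analytic_fredholm_meromorphic
    {E : Type*} [NormedAddCommGroup E] [NormedSpace ℂ E] [CompleteSpace E]
    {U : Set ℂ} (hUopen : IsOpen U) (hUne : U.Nonempty) (hUconn : IsConnected U)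
    (R : ℂ → E →L[ℂ] E) (hRan : AnalyticOnNhd ℂ R U)
    (hRcpt : ∀ z ∈ U, IsCompactOperator (R z))
    (hinj : ∃ z₀ ∈ U, Function.Injective ((1 + R z₀ : E →L[ℂ] E) : E → E)) :
    MeromorphicOn (fun z => Ring.inverse (1 + R z)) U := by
  have hloc : ∀ z ∈ U, (∀ᶠ w in 𝓝[≠] z, ¬ IsUnit (1 + R w)) ∨
      ((∀ᶠ w in 𝓝[≠] z, IsUnit (1 + R w)) ∧
        MeromorphicAt (fun w => Ring.inverse (1 + R w)) z) := by
    intro z hz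
    obtain ⟨m, f, y, hu⟩ := afm_exists_finite_rank _ (R z) (hRcpt z hz) le_rfl
    exact afm_local (A := fun w => 1 + R w) (analyticAt_const.add (hRan z hz)) hu
  obtain ⟨z₀, hz₀, hi⟩ := hinj
  have hu₀ : IsUnit (1 + R z₀) := afm_isUnit_of_injective (hRcpt z₀ hz₀) hi
  have hev₀ : ∀ᶠ w in 𝓝[≠] z₀, IsUnit (1 + R w) := by
    have hc : ContinuousAt (fun w => 1 + R w) z₀ :=
      continuousAt_const.add (hRan z₀ hz₀).continuousAt
    exact (hc.eventually (Units.isOpen.mem_nhds hu₀)).filter_mono nhdsWithin_le_nhds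
  have hsub : U ⊆ {z | ∀ᶠ w in 𝓝[≠] z, IsUnit (1 + R w)} := by
    refine hUconn.isPreconnected.subset_left_of_subset_union (afm_isOpen _)
      (afm_isOpen fun w => ¬ IsUnit (1 + R w)) ?_ ?_ ⟨z₀, hz₀, hev₀⟩
    · rw [Set.disjoint_left]
      intro z h1 h2
      rw [Set.mem_setOf_eq] at h1 h2
      obtain ⟨w, hw⟩ := (Filter.Eventually.and h1 h2).exists
      exact hw.2 hw.1
    · intro z hz
      rcases hloc z hz with h | h
      · exact Or.inr h
      · exact Or.inl h.1
  intro z hz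
  rcases hloc z hz with h | h
  · have h1 := hsub hz
    rw [Set.mem_setOf_eq] at h1
    obtain ⟨w, hw⟩ := (Filter.Eventually.and h1 h).exists
    exact absurd hw.1 hw.2
  · exact h.2
end
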